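/- Let Y be a CAT(0) space, E : Y → ℝ ∪ {+∞} a λ-convex and lower semicontinuous functional with D(E) nonempty, λ ∈ ℝ, and let (y_t)_{t>0} be a gradient flow trajectory for E starting from y ∈ Y. Then y_t ∈ D(|∂⁻E|) ⊆ D(E) for every t > 0, the map t ↦ E(y_t) is nonincreasing on (0,∞), and the map t ↦ e^{λt}·|∂⁻E|(y_t) is nonincreasing on (0,∞). -/

import Mathlib

open Filter MeasureTheory Set Bornology
open scoped ENNReal Topology NNReal

/-- A (constant-speed, minimizing) geodesic defined on `[0,1]`:
`d(γ_s, γ_t) = |s - t| * d(γ_0, γ_1)` for all `s, t ∈ [0,1]`. -/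
def IsGeodesic {Y : Type*} [MetricSpace Y] (γ : ℝ → Y) : Prop :=
  ∀ s ∈ Set.Icc (0:ℝ) 1, ∀ t ∈ Set.Icc (0:ℝ) 1,
    dist (γ s) (γ t) = |s - t| * dist (γ 0) (γ 1)

/-- A metric space is geodesic if every two points are joined by a geodesic. -/
def GeodesicSpace (Y : Type*) [MetricSpace Y] : Prop :=
  ∀ x y : Y, ∃ γ : ℝ → Y, IsGeodesic γ ∧ γ 0 = x ∧ γ 1 = y

/-- The CAT(0) condition: geodesic space satisfying the comparison inequality
`d²(γ_t, a) ≤ (1-t)·d²(γ_0, a) + t·d²(γ_1, a) − t(1-t)·d²(γ_0, γ_1)`.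
(Completeness is required separately as a typeclass assumption.) -/
def Cat0 (Y : Type*) [MetricSpace Y] : Prop :=
  GeodesicSpace Y ∧
    ∀ γ : ℝ → Y, IsGeodesic γ → ∀ a : Y, ∀ t ∈ Set.Icc (0:ℝ) 1,
      dist (γ t) a ^ 2 ≤ (1 - t) * dist (γ 0) a ^ 2 + t * dist (γ 1) a ^ 2
        - t * (1 - t) * dist (γ 0) (γ 1) ^ 2

/-- A subset is geodesically convex if every geodesic joining two of its points
lies entirely inside it. -/
def GeodesicConvex {Y : Type*} [MetricSpace Y] (C : Set Y) : Prop :=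
  ∀ γ : ℝ → Y, IsGeodesic γ → γ 0 ∈ C → γ 1 ∈ C → ∀ t ∈ Set.Icc (0:ℝ) 1, γ t ∈ C

/-- `lam`-convexity along geodesics of an extended-real-valued functional:
`E(γ_t) ≤ (1-t)E(γ_0) + tE(γ_1) − (lam/2)t(1−t)d²(γ_0,γ_1)`. -/
def LamConvex {Y : Type*} [MetricSpace Y] (lam : ℝ) (E : Y → EReal) : Prop :=
  ∀ γ : ℝ → Y, IsGeodesic γ → ∀ t ∈ Set.Icc (0:ℝ) 1,
    E (γ t) ≤ ((1 - t : ℝ) : EReal) * E (γ 0) + ((t : ℝ) : EReal) * E (γ 1)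
      - ((lam / 2 * t * (1 - t) * dist (γ 0) (γ 1) ^ 2 : ℝ) : EReal)

/-- The descending slope `|∂⁻E|(y) = limsup_{z→y} (E(y)−E(z))⁺ / d(y,z)`,
set to `∞` outside the domain `{E < ∞}` of `E`. -/
noncomputable def descendingSlope {Y : Type*} [MetricSpace Y] (E : Y → EReal) (y : Y) :
    ℝ≥0∞ :=
  if E y = ⊤ then ⊤
  else Filter.limsup (fun z => ENNReal.ofReal ((E y - E z).toReal / dist y z))
      (nhdsWithin y {y}ᶜ)

/-- `ω(y; (y_n)) := limsup_n d(y, y_n)²`. -/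
noncomputable def asymptoticRadius {Y : Type*} [MetricSpace Y] (yn : ℕ → Y) (y : Y) : ℝ :=
  Filter.limsup (fun n => dist y (yn n) ^ 2) Filter.atTop

/-- Weak convergence of a bounded sequence: `y` is an asymptotic center
(i.e. a minimizer of `ω(·; ·)`) of every subsequence. -/
def WeakConv {Y : Type*} [MetricSpace Y] (yn : ℕ → Y) (y : Y) : Prop :=
  Bornology.IsBounded (Set.range yn) ∧
    ∀ φ : ℕ → ℕ, StrictMono φ →
      ∀ z : Y, asymptoticRadius (yn ∘ φ) y ≤ asymptoticRadius (yn ∘ φ) z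

/-- Absolute continuity on a set `I ⊆ ℝ`: there is a nonnegative integrable `g`
with `d(y_s, y_t) ≤ ∫_s^t g` for `s ≤ t` in `I`. -/
def AbsContOnSet {Y : Type*} [MetricSpace Y] (y : ℝ → Y) (I : Set ℝ) : Prop :=
  ∃ g : ℝ → ℝ, (∀ t, 0 ≤ g t) ∧ MeasureTheory.IntegrableOn g I ∧
    ∀ s ∈ I, ∀ t ∈ I, s ≤ t → dist (y s) (y t) ≤ ∫ r in s..t, g r

/-- Absolute continuity on the interval `[a,b]`. -/
def AbsContOn {Y : Type*} [MetricSpace Y] (y : ℝ → Y) (a b : ℝ) : Prop :=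
  AbsContOnSet y (Set.Icc a b)

/-- Local absolute continuity on `(0,∞)`. -/
def LocAbsCont {Y : Type*} [MetricSpace Y] (y : ℝ → Y) : Prop :=
  ∀ a b : ℝ, 0 < a → a ≤ b → AbsContOn y a b

/-- The Evolution Variational Inequality: for every `z`, for a.e. `t > 0` the
derivative of `t ↦ ½ d²(y_t, z)` exists and
`(d/dt)(½d²(y_t,z)) + E(y_t) + (lam/2)d²(y_t,z) ≤ E(z)`. -/
def EVI {Y : Type*} [MetricSpace Y] (lam : ℝ) (E : Y → EReal) (y : ℝ → Y) : Prop :=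
  ∀ z : Y, ∀ᵐ t ∂(MeasureTheory.volume.restrict (Set.Ioi (0:ℝ))),
    ∃ d' : ℝ, HasDerivAt (fun s => dist (y s) z ^ 2 / 2) d' t ∧
      (d' : EReal) + E (y t) + ((lam / 2 * dist (y t) z ^ 2 : ℝ) : EReal) ≤ E z

/-- A gradient flow trajectory for `E` starting from `y₀`: a locally absolutely
continuous curve on `(0,∞)` converging to `y₀` at `0` and satisfying the EVI. -/
def GradientFlow {Y : Type*} [MetricSpace Y] (lam : ℝ) (E : Y → EReal) (y₀ : Y)
    (y : ℝ → Y) : Prop :=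
  LocAbsCont y ∧ Filter.Tendsto y (nhdsWithin 0 (Set.Ioi 0)) (nhds y₀) ∧ EVI lam E y

/-!
Multiplying the EVI by `e^{λ(r-s)}` and integrating over `[s, t]` turns it into
`e^{λ(t-s)} d²(y_t, z)/2 ≤ d²(y_s, z)/2 + ∫₀^{t-s} e^{λu} du · (E(z) - E(y_t))`, once the energy is
known to decrease. Testing this for two such curves, each against a point of the other, gives the
contraction `d(y_t, w_t) ≤ e^{-λ(t-s)} d(y_s, w_s)`. For `w = y_{· + k}` and `k ↓ 0` it says that
`e^{λt}` times the right metric speed of `y` decreases. That speed is the descending slope: the EVI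
at time `t` bounds `E(y_t) - E(z)` by the speed times `d(y_t, z)`, up to a quadratic error, and,
tested with `z = y_t`, it bounds the growth of `d(y_r, y_t)` by the slope. The speed is finite
almost everywhere by absolute continuity, hence everywhere by its monotonicity.
-/

section AbsolutelyContinuous

lemma absolutelyContinuousOnInterval_of_dist_le {X Z : Type*} [PseudoMetricSpace X]
    [PseudoMetricSpace Z] {f : ℝ → X} {g : ℝ → Z} {a b : ℝ}
    (hg : AbsolutelyContinuousOnInterval g a b)
    (h : ∀ s ∈ uIcc a b, ∀ t ∈ uIcc a b, dist (f s) (f t) ≤ dist (g s) (g t)) :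
    AbsolutelyContinuousOnInterval f a b := by
  refine squeeze_zero' (Eventually.of_forall fun _ ↦ Finset.sum_nonneg fun _ _ ↦ dist_nonneg)
    ?_ hg
  rw [eventually_inf_principal]
  filter_upwards with I hI
  exact Finset.sum_le_sum fun i hi ↦ h _ (hI.1 i hi).1 _ (hI.1 i hi).2

lemma le_of_absolutelyContinuousOnInterval_of_ae_deriv_nonpos {f : ℝ → ℝ} {a b : ℝ}
    (hab : a ≤ b) (hf : AbsolutelyContinuousOnInterval f a b)
    (hf' : ∀ᵐ x, x ∈ Ioc a b → deriv f x ≤ 0) : f b ≤ f a := by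
  rw [← sub_nonpos, ← hf.integral_deriv_eq_sub, intervalIntegral.integral_of_le hab]
  exact integral_nonpos_of_ae ((ae_restrict_iff' measurableSet_Ioc).2 hf')

variable {Y : Type*} [MetricSpace Y] {y : ℝ → Y} {a b : ℝ}

lemma AbsContOn.exists_dist_le_dist (hab : a ≤ b) (h : AbsContOn y a b) :
    ∃ G : ℝ → ℝ, AbsolutelyContinuousOnInterval G a b ∧
      ∀ s ∈ uIcc a b, ∀ t ∈ uIcc a b, dist (y s) (y t) ≤ dist (G s) (G t) := by
  obtain ⟨g, -, hg_int, hg⟩ := h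
  have hi : IntervalIntegrable g volume a b := by
    rwa [intervalIntegrable_iff_integrableOn_Icc_of_le hab]
  refine ⟨fun t ↦ ∫ v in a..t, g v,
    hi.absolutelyContinuousOnInterval_intervalIntegral left_mem_uIcc, ?_⟩
  have hsub : ∀ r ∈ uIcc a b, IntervalIntegrable g volume a r := fun r hr ↦
    hi.mono_set (uIcc_subset_uIcc_left hr)
  have dist_le_of_le : ∀ s ∈ uIcc a b, ∀ t ∈ uIcc a b, s ≤ t →
      dist (y s) (y t) ≤ dist (∫ v in a..s, g v) (∫ v in a..t, g v) := by
    intro s hs t ht hst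
    rw [dist_comm (∫ v in a..s, g v), Real.dist_eq,
      intervalIntegral.integral_interval_sub_left (hsub t ht) (hsub s hs)]
    rw [uIcc_of_le hab] at hs ht
    exact (hg s hs t ht hst).trans (le_abs_self _)
  intro s hs t ht
  rcases le_total s t with hst | hts
  · exact dist_le_of_le s hs t ht hst
  · simpa only [dist_comm] using dist_le_of_le t ht s hs hts

lemma AbsContOn.continuousOn (hab : a ≤ b) (h : AbsContOn y a b) :
    ContinuousOn y (Icc a b) := by
  obtain ⟨G, hG, hyG⟩ := h.exists_dist_le_dist hab
  have hGc := hG.continuousOn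
  rw [uIcc_of_le hab] at hyG hGc
  intro t ht
  refine tendsto_iff_dist_tendsto_zero.2 (squeeze_zero' (Eventually.of_forall fun _ ↦ dist_nonneg)
    ?_ (tendsto_iff_dist_tendsto_zero.1 (hGc t ht)))
  filter_upwards [self_mem_nhdsWithin] with s hs
  exact hyG s hs t ht

lemma AbsContOn.absolutelyContinuousOnInterval_half_dist_sq (hab : a ≤ b) (h : AbsContOn y a b)
    (z : Y) : AbsolutelyContinuousOnInterval (fun r ↦ dist (y r) z ^ 2 / 2) a b := by
  obtain ⟨G, hG, hyG⟩ := h.exists_dist_le_dist hab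
  have hd : AbsolutelyContinuousOnInterval (fun r ↦ dist (y r) z) a b :=
    absolutelyContinuousOnInterval_of_dist_le hG fun s hs t ht ↦
      (dist_dist_dist_le_left (y s) (y t) z).trans (hyG s hs t ht)
  have hsq := (hd.fun_mul hd).const_mul (1 / 2)
  convert hsq using 2 with r
  ring

lemma LocAbsCont.continuousOn (h : LocAbsCont y) : ContinuousOn y (Ioi 0) := by
  intro t ht
  have ht : 0 < t := ht
  have hle : t / 2 ≤ t + 1 := by linarith
  have hc := (h (t / 2) (t + 1) (half_pos ht) hle).continuousOn hle
  exact (hc.continuousAt (Icc_mem_nhds (half_lt_self ht) (lt_add_one t))).continuousWithinAt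

end AbsolutelyContinuous

section RightSpeed

/-- The right upper metric speed `limsup_{k ↓ 0} d(y_{t+k}, y_t) / k` of the curve `y` at time `t`,
with values in `[0, ∞]`. Along an EVI trajectory it coincides with the descending slope. -/
noncomputable def rightSpeed {Y : Type*} [MetricSpace Y] (y : ℝ → Y) (t : ℝ) : ℝ≥0∞ :=
  limsup (fun k ↦ ENNReal.ofReal (dist (y (t + k)) (y t) / k)) (𝓝[>] 0)

lemma map_const_add_nhdsGT_zero (t : ℝ) : map (t + ·) (𝓝[>] 0) = 𝓝[>] t := by
  have h := (Homeomorph.addLeft t).isEmbedding.map_nhdsWithin_eq (Ioi 0) 0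
  simpa only [Homeomorph.coe_addLeft, image_const_add_Ioi, add_zero] using h

variable {Y : Type*} [MetricSpace Y] {y : ℝ → Y} {t C : ℝ}

lemma eventually_dist_le_of_rightSpeed_lt (h : rightSpeed y t < ENNReal.ofReal C) :
    ∀ᶠ r in 𝓝[>] t, dist (y r) (y t) ≤ C * (r - t) := by
  rw [← map_const_add_nhdsGT_zero, eventually_map]
  filter_upwards [eventually_lt_of_limsup_lt h, self_mem_nhdsWithin] with k hk hk0
  rw [add_sub_cancel_left, ← div_le_iff₀ hk0]
  exact (ENNReal.ofReal_lt_ofReal_iff'.1 hk).1.le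

lemma rightSpeed_le_ofReal (h : ∀ᶠ r in 𝓝[>] t, dist (y r) (y t) ≤ C * (r - t)) :
    rightSpeed y t ≤ ENNReal.ofReal C := by
  rw [← map_const_add_nhdsGT_zero, eventually_map] at h
  refine limsup_le_of_le (by isBoundedDefault) ?_
  filter_upwards [h, self_mem_nhdsWithin] with k hk hk0
  rw [add_sub_cancel_left, ← div_le_iff₀ hk0] at hk
  exact ENNReal.ofReal_le_ofReal hk

lemma rightSpeed_ne_top_of_dist_le_dist {G : ℝ → ℝ} (hG : DifferentiableAt ℝ G t)
    (h : ∀ᶠ r in 𝓝[>] t, dist (y r) (y t) ≤ dist (G r) (G t)) : rightSpeed y t ≠ ⊤ := by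
  obtain ⟨C, hC⟩ := hG.isBigO_sub.bound
  refine ne_top_of_le_ne_top ENNReal.ofReal_ne_top (rightSpeed_le_ofReal (C := C) ?_)
  filter_upwards [h, nhdsWithin_le_nhds hC, self_mem_nhdsWithin] with r hr hGr hrt
  calc dist (y r) (y t) ≤ ‖G r - G t‖ := by simpa only [dist_eq_norm] using hr
    _ ≤ C * ‖r - t‖ := hGr
    _ = C * (r - t) := by rw [Real.norm_of_nonneg (sub_nonneg.2 (le_of_lt hrt))]

lemma AbsContOn.ae_rightSpeed_ne_top {a b : ℝ} (hab : a ≤ b) (h : AbsContOn y a b) :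
    ∀ᵐ s, s ∈ Ioo a b → rightSpeed y s ≠ ⊤ := by
  obtain ⟨G, hG, hyG⟩ := h.exists_dist_le_dist hab
  filter_upwards [hG.ae_differentiableAt] with s hs hsI
  rw [uIcc_of_le hab] at hs hyG
  refine rightSpeed_ne_top_of_dist_le_dist (hs (Ioo_subset_Icc_self hsI)) ?_
  filter_upwards [Ioo_mem_nhdsGT hsI.2] with r hr
  exact hyG r ⟨hsI.1.le.trans hr.1.le, hr.2.le⟩ s (Ioo_subset_Icc_self hsI)

lemma exists_mem_Ioo_of_ae {p : ℝ → Prop} {a b : ℝ} (hab : a < b) (h : ∀ᵐ s, s ∈ Ioo a b → p s) :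
    ∃ s ∈ Ioo a b, p s := by
  have hne : (ae (volume.restrict (Ioo a b))).NeBot := by
    rw [ae_neBot, Ne, Measure.restrict_eq_zero]
    simp [hab]
  have hp := (ae_restrict_iff' measurableSet_Ioo).2 h
  obtain ⟨s, hs, hps⟩ := ((ae_restrict_mem measurableSet_Ioo).and hp).exists
  exact ⟨s, hs, hps⟩

lemma LocAbsCont.exists_rightSpeed_ne_top (h : LocAbsCont y) (ht : 0 < t) :
    ∃ s ∈ Ioo 0 t, rightSpeed y s ≠ ⊤ := by
  obtain ⟨s, hs, hspeed⟩ := exists_mem_Ioo_of_ae (half_lt_self ht)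
    ((h (t / 2) t (half_pos ht) (half_le_self ht.le)).ae_rightSpeed_ne_top (half_le_self ht.le))
  exact ⟨s, ⟨(half_pos ht).trans hs.1, hs.2⟩, hspeed⟩

end RightSpeed

section DescendingSlope

variable {Y : Type*} [MetricSpace Y] {E : Y → EReal} {x : Y} {C : ℝ}

lemma eventually_toReal_sub_le_of_descendingSlope_lt
    (h : descendingSlope E x < ENNReal.ofReal C) :
    ∀ᶠ z in 𝓝 x, (E x - E z).toReal ≤ C * dist x z := by
  have hfin : E x ≠ ⊤ := fun htop ↦ by simp [descendingSlope, htop] at h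
  rw [descendingSlope, if_neg hfin] at h
  filter_upwards [eventually_nhdsWithin_iff.1 (eventually_lt_of_limsup_lt h)] with z hz
  rcases eq_or_ne z x with rfl | hzx
  · have hself : (E z - E z).toReal = 0 := by
      induction E z <;> simp
    simp [hself]
  · exact ((div_lt_iff₀ (dist_pos.2 hzx.symm)).1 (ENNReal.ofReal_lt_ofReal_iff'.1 (hz hzx)).1).le

lemma descendingSlope_le_ofReal (hfin : E x ≠ ⊤)
    (h : ∀ᶠ z in 𝓝[≠] x, (E x - E z).toReal ≤ C * dist x z) :
    descendingSlope E x ≤ ENNReal.ofReal C := by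
  rw [descendingSlope, if_neg hfin]
  refine limsup_le_of_le (by isBoundedDefault) ?_
  filter_upwards [h, self_mem_nhdsWithin] with z hz hzx
  exact ENNReal.ofReal_le_ofReal ((div_le_iff₀ (dist_pos.2 (Ne.symm hzx))).2 hz)

end DescendingSlope

section DiniDerivative

lemma eventually_slope_lt_of_le {F G : ℝ → ℝ} {F' x ρ : ℝ} (hF : HasDerivWithinAt F F' (Ioi x) x)
    (hFx : F x ≤ G x) (hGF : ∀ r, x < r → G r ≤ F r) (hρ : F' < ρ) :
    ∀ᶠ r in 𝓝[>] x, slope G x r < ρ := by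
  filter_upwards [hF.limsup_slope_le' self_notMem_Ioi hρ, self_mem_nhdsWithin] with r hr hxr
  have hpos : 0 < r - x := sub_pos.2 hxr
  refine lt_of_le_of_lt ?_ hr
  rw [slope_def_field, slope_def_field]
  gcongr
  exact hGF r hxr

lemma hasDerivWithinAt_mul_of_eq_zero {f q : ℝ → ℝ} {f' x : ℝ} {s : Set ℝ}
    (hf : HasDerivWithinAt f f' s x) (hfx : f x = 0) (hq : ContinuousWithinAt q s x) :
    HasDerivWithinAt (fun r ↦ f r * q r) (f' * q x) s x := by
  rw [hasDerivWithinAt_iff_tendsto_slope] at hf ⊢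
  refine (hf.mul (hq.mono_left (nhdsWithin_mono _ sdiff_subset))).congr fun r ↦ ?_
  rw [slope_def_field, slope_def_field, hfx]
  ring

lemma le_add_mul_sub_of_slope_half_sq_lt {f : ℝ → ℝ} {a b M : ℝ} (hM : 0 ≤ M)
    (hf : ContinuousOn f (Icc a b)) (hf0 : ∀ x ∈ Icc a b, 0 ≤ f x)
    (hf' : ∀ x ∈ Ico a b, ∀ ρ, M * f x < ρ → ∃ᶠ r in 𝓝[>] x, slope (fun r ↦ f r ^ 2 / 2) x r < ρ) :
    ∀ x ∈ Icc a b, f x ≤ f a + M * (x - a) := by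
  intro x hx
  have hab : a ≤ b := hx.1.trans hx.2
  have hfa : 0 ≤ f a := hf0 a (left_mem_Icc.2 hab)
  -- A barrier starting strictly above `f a` stays positive, so that the fencing is strict.
  have barrier : ∀ η > 0, f x ≤ f a + η + (M + η) * (x - a) := by
    intro η hη
    set L : ℝ → ℝ := fun r ↦ f a + η + (M + η) * (r - a)
    have hL : ∀ r ∈ Icc a b, 0 < L r := fun r hr ↦ by
      have := sub_nonneg.2 hr.1
      positivity
    have hL' : ∀ r, HasDerivAt (fun r ↦ L r ^ 2 / 2) ((M + η) * L r) r := fun r ↦ by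
      have hlin : HasDerivAt L (M + η) r :=
        ((((hasDerivAt_id r).sub_const a).const_mul (M + η)).const_add (f a + η)).congr_deriv
          (mul_one _)
      refine ((hlin.fun_pow 2).div_const 2).congr_deriv ?_
      ring
    have hsq_cont : ContinuousOn (fun r ↦ f r ^ 2 / 2) (Icc a b) := by fun_prop
    have hsq := image_le_of_liminf_slope_right_lt_deriv_boundary hsq_cont hf'
      (by simp only [L, sub_self, mul_zero, add_zero]; gcongr; linarith) hL' (fun r hr heq ↦ ?_) hx
    · exact (pow_le_pow_iff_left₀ (hf0 x hx) (hL x hx).le two_ne_zero).1 (by linarith)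
    · have hr := Ico_subset_Icc_self hr
      have hfL : f r = L r :=
        (pow_left_inj₀ (hf0 r hr) (hL r hr).le two_ne_zero).1 (by linarith)
      rw [hfL]
      exact mul_lt_mul_of_pos_right (lt_add_of_pos_right M hη) (hL r hr)
  have hlim : Tendsto (fun η ↦ f a + η + (M + η) * (x - a)) (𝓝[>] 0) (𝓝 (f a + M * (x - a))) := by
    have hc : Continuous fun η ↦ f a + η + (M + η) * (x - a) := by fun_prop
    simpa using (hc.tendsto 0).mono_left nhdsWithin_le_nhds
  exact ge_of_tendsto hlim (eventually_nhdsWithin_of_forall barrier)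

end DiniDerivative

section ExpPrimitive

/-- The primitive `h ↦ ∫₀ʰ e^{λu} du` of the exponential weight. An integral rather than
`(e^{λh} - 1) / λ`, so that `λ = 0` is not special. -/
noncomputable def expPrimitive (lam h : ℝ) : ℝ := ∫ u in (0 : ℝ)..h, Real.exp (lam * u)

variable (lam : ℝ)

@[simp] lemma expPrimitive_zero : expPrimitive lam 0 = 0 := intervalIntegral.integral_same

lemma expPrimitive_pos {h : ℝ} (hh : 0 < h) : 0 < expPrimitive lam h :=
  intervalIntegral.intervalIntegral_pos_of_pos
    (Continuous.intervalIntegrable (by fun_prop) 0 h) (fun _ ↦ Real.exp_pos _) hh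

lemma hasDerivAt_expPrimitive (h : ℝ) : HasDerivAt (expPrimitive lam) (Real.exp (lam * h)) h :=
  ((by fun_prop : Continuous fun u ↦ Real.exp (lam * u)).integral_hasStrictDerivAt 0 h).hasDerivAt

lemma contDiff_expPrimitive : ContDiff ℝ 1 (expPrimitive lam) := by
  rw [contDiff_one_iff_deriv, funext fun h ↦ (hasDerivAt_expPrimitive lam h).deriv]
  exact ⟨fun h ↦ (hasDerivAt_expPrimitive lam h).differentiableAt, by fun_prop⟩

lemma hasDerivAt_expPrimitive_sub (s r : ℝ) :
    HasDerivAt (fun r ↦ expPrimitive lam (r - s)) (Real.exp (lam * (r - s))) r :=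
  (hasDerivAt_expPrimitive lam (r - s)).comp_sub_const r s

lemma hasDerivAt_exp_mul_sub (s r : ℝ) :
    HasDerivAt (fun r ↦ Real.exp (lam * (r - s))) (Real.exp (lam * (r - s)) * lam) r := by
  simpa using (((hasDerivAt_id r).sub_const s).const_mul lam).exp

variable {lam}

lemma eventually_slope_lt_of_exp_mul_le {μ x ρ : ℝ} {G q : ℝ → ℝ}
    (hq : ContinuousWithinAt q (Ioi x) x)
    (hG : ∀ r, x < r → Real.exp (μ * (r - x)) * G r ≤ G x + expPrimitive lam (r - x) * q r)
    (hρ : -μ * G x + q x < ρ) : ∀ᶠ r in 𝓝[>] x, slope G x r < ρ := by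
  have hP : HasDerivWithinAt (fun r ↦ expPrimitive lam (r - x) * q r) (q x) (Ioi x) x := by
    simpa using hasDerivWithinAt_mul_of_eq_zero
      (hasDerivAt_expPrimitive_sub lam x x).hasDerivWithinAt (by simp) hq
  have hF : HasDerivWithinAt
      (fun r ↦ Real.exp (-μ * (r - x)) * (G x + expPrimitive lam (r - x) * q r))
      (-μ * G x + q x) (Ioi x) x := by
    simpa using (hasDerivAt_exp_mul_sub (-μ) x x).hasDerivWithinAt.fun_mul (hP.const_add (G x))
  refine eventually_slope_lt_of_le hF (by simp) (fun r hr ↦ ?_) hρ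
  rw [neg_mul, Real.exp_neg, inv_mul_eq_div, le_div_iff₀ (Real.exp_pos _), mul_comm]
  exact hG r hr

end ExpPrimitive

lemma eventually_neg_half_mul_dist_sq_le {Y : Type*} [PseudoMetricSpace Y] (lam : ℝ) {δ : ℝ}
    (hδ : 0 < δ) (x : Y) : ∀ᶠ z in 𝓝 x, -(lam / 2 * dist x z ^ 2) ≤ δ * dist x z := by
  have hc : Continuous fun z ↦ -(lam / 2) * dist x z := by fun_prop
  filter_upwards [(hc.tendsto x).eventually_lt_const (by simpa using hδ)] with z hz
  have hmul := mul_le_mul_of_nonneg_right hz.le (dist_nonneg (x := x) (y := z))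
  linarith

lemma ennreal_le_of_forall_lt_ofReal {a b : ℝ≥0∞}
    (h : ∀ C C' : ℝ, 0 ≤ C → b < ENNReal.ofReal C → C < C' → a ≤ ENNReal.ofReal C') : a ≤ b := by
  refine le_of_forall_gt_imp_ge_of_dense fun c hbc ↦ ?_
  obtain ⟨r, hbr, hrc⟩ := ENNReal.lt_iff_exists_nnreal_btwn.1 hbc
  obtain ⟨r', hrr', hr'c⟩ := ENNReal.lt_iff_exists_nnreal_btwn.1 hrc
  rw [← ENNReal.ofReal_coe_nnreal] at hbr hr'c
  exact (h r r' r.coe_nonneg hbr (by exact_mod_cast hrr')).trans hr'c.le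

/-- The integral form of the EVI for a continuous curve `y` with finite, lower semicontinuous
energy `e t = E(y_t)`: the pointwise EVI multiplied by `e^{λ(r-s)}` and integrated over `[s, t]`,
with the energy estimated from below by its final value. The real-valued `e` is a parameter because
`E` itself takes values in `EReal`. -/
structure IntegralEVI {Y : Type*} [MetricSpace Y] (lam : ℝ) (E : Y → EReal) (y : ℝ → Y)
    (e : ℝ → ℝ) : Prop where
  energy_eq : ∀ ⦃t⦄, 0 < t → E (y t) = e t
  continuousOn : ContinuousOn y (Ioi 0)
  lowerSemicontinuousOn : LowerSemicontinuousOn e (Ioi 0)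
  exp_mul_half_dist_sq_le : ∀ ⦃s t⦄, 0 < s → s ≤ t → ∀ (z : Y) (c : ℝ), E z = c →
    Real.exp (lam * (t - s)) * (dist (y t) z ^ 2 / 2) ≤
      dist (y s) z ^ 2 / 2 + expPrimitive lam (t - s) * (c - e t)

namespace IntegralEVI

variable {Y : Type*} [MetricSpace Y] {lam : ℝ} {E : Y → EReal} {y w : ℝ → Y} {e e' : ℝ → ℝ}
  {s t : ℝ}

lemma continuousAt (h : IntegralEVI lam E y e) (ht : 0 < t) : ContinuousAt y t :=
  h.continuousOn.continuousAt (Ioi_mem_nhds ht)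

lemma shift (h : IntegralEVI lam E y e) {k : ℝ} (hk : 0 ≤ k) :
    IntegralEVI lam E (fun t ↦ y (t + k)) (fun t ↦ e (t + k)) := by
  have hmaps : MapsTo (· + k) (Ioi 0) (Ioi 0) := fun t ht ↦ add_pos_of_pos_of_nonneg ht hk
  have hcont : ContinuousOn (· + k) (Ioi (0 : ℝ)) := by fun_prop
  refine ⟨fun t ht ↦ h.energy_eq (hmaps ht), h.continuousOn.comp hcont hmaps,
    h.lowerSemicontinuousOn.comp hcont hmaps, fun s t hs hst z c hz ↦ ?_⟩
  simpa only [add_sub_add_right_eq_sub] using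
    h.exp_mul_half_dist_sq_le (hmaps hs) (add_le_add_left hst k) z c hz

lemma antitoneOn (h : IntegralEVI lam E y e) : AntitoneOn e (Ioi 0) := by
  intro s hs t ht hst
  rcases hst.eq_or_lt with rfl | hlt
  · rfl
  have hint := h.exp_mul_half_dist_sq_le hs hst (y s) (e s) (h.energy_eq hs)
  have hnonneg : 0 ≤ expPrimitive lam (t - s) * (e s - e t) := by
    refine le_trans (by positivity) (hint.trans_eq ?_)
    simp
  exact sub_nonneg.1 (nonneg_of_mul_nonneg_right hnonneg (expPrimitive_pos lam (sub_pos.2 hlt)))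

lemma continuousWithinAt_energy (h : IntegralEVI lam E y e) (ht : 0 < t) :
    ContinuousWithinAt e (Ioi t) t := by
  refine tendsto_order.2 ⟨fun a ha ↦ ?_, fun a ha ↦ ?_⟩
  · exact nhdsWithin_mono t (Ioi_subset_Ioi ht.le) (h.lowerSemicontinuousOn t ht a ha)
  · filter_upwards [self_mem_nhdsWithin] with r hr
    exact (h.antitoneOn ht (ht.trans hr) (le_of_lt hr)).trans_lt ha

lemma eventually_slope_half_dist_sq_lt (h : IntegralEVI lam E y e) (ht : 0 < t) {z : Y} {c ρ : ℝ}
    (hz : E z = c) (hρ : -lam * (dist (y t) z ^ 2 / 2) + (c - e t) < ρ) :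
    ∀ᶠ r in 𝓝[>] t, slope (fun r ↦ dist (y r) z ^ 2 / 2) t r < ρ :=
  eventually_slope_lt_of_exp_mul_le (continuousWithinAt_const.sub (h.continuousWithinAt_energy ht))
    (fun _ hr ↦ h.exp_mul_half_dist_sq_le ht hr.le z c hz) hρ

lemma exp_mul_half_dist_sq_le_of_pair (hy : IntegralEVI lam E y e) (hw : IntegralEVI lam E w e')
    (hs : 0 < s) (hst : s ≤ t) :
    Real.exp (2 * lam * (t - s)) * (dist (y t) (w t) ^ 2 / 2) ≤
      dist (y s) (w s) ^ 2 / 2 + expPrimitive lam (t - s) *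
        (e s - e' t + Real.exp (lam * (t - s)) * (e' t - e t)) := by
  have hyt := hy.exp_mul_half_dist_sq_le hs hst (w t) (e' t) (hw.energy_eq (hs.trans_le hst))
  have hwt := hw.exp_mul_half_dist_sq_le hs hst (y s) (e s) (hy.energy_eq hs)
  rw [dist_comm (w t), dist_comm (w s)] at hwt
  have hexp : Real.exp (2 * lam * (t - s)) =
      Real.exp (lam * (t - s)) * Real.exp (lam * (t - s)) := by
    rw [← Real.exp_add]
    ring_nf
  have hmul := mul_le_mul_of_nonneg_left hyt (Real.exp_pos (lam * (t - s))).le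
  rw [hexp]
  linarith

lemma eventually_slope_half_dist_sq_lt_of_pair (hy : IntegralEVI lam E y e)
    (hw : IntegralEVI lam E w e') (ht : 0 < t) {ρ : ℝ}
    (hρ : -(2 * lam) * (dist (y t) (w t) ^ 2 / 2) < ρ) :
    ∀ᶠ r in 𝓝[>] t, slope (fun r ↦ dist (y r) (w r) ^ 2 / 2) t r < ρ := by
  have he := hy.continuousWithinAt_energy ht
  have he' := hw.continuousWithinAt_energy ht
  have hexp : ContinuousWithinAt (fun r ↦ Real.exp (lam * (r - t))) (Ioi t) t := by fun_prop
  refine eventually_slope_lt_of_exp_mul_le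
    ((continuousWithinAt_const.sub he').add (hexp.mul (he'.sub he)))
    (fun r hr ↦ hy.exp_mul_half_dist_sq_le_of_pair hw ht hr.le) ?_
  simpa using hρ

lemma dist_le_exp_mul_dist (hy : IntegralEVI lam E y e) (hw : IntegralEVI lam E w e')
    (hs : 0 < s) (hst : s ≤ t) :
    dist (y t) (w t) ≤ Real.exp (-(lam * (t - s))) * dist (y s) (w s) := by
  have hpos : Icc s t ⊆ Ioi 0 := fun r hr ↦ hs.trans_le hr.1
  have hcont : ContinuousOn (fun r ↦ dist (y r) (w r) ^ 2 / 2) (Icc s t) := by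
    have hy_cont := hy.continuousOn.mono hpos
    have hw_cont := hw.continuousOn.mono hpos
    fun_prop
  have hgronwall := le_gronwallBound_of_liminf_deriv_right_le hcont
    (fun x hx _ hρ ↦
      (hy.eventually_slope_half_dist_sq_lt_of_pair hw (hs.trans_le hx.1) hρ).frequently)
    le_rfl (fun _ _ ↦ (add_zero _).ge) t (right_mem_Icc.2 hst)
  have hexp : Real.exp (-(lam * (t - s))) ^ 2 = Real.exp (-(2 * lam) * (t - s)) := by
    rw [← Real.exp_nat_mul]
    push_cast
    ring_nf
  rw [gronwallBound_ε0, ← hexp] at hgronwall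
  refine (pow_le_pow_iff_left₀ dist_nonneg (by positivity) two_ne_zero).1 ?_
  rw [mul_pow]
  linarith

lemma rightSpeed_le_exp_mul (h : IntegralEVI lam E y e) (hs : 0 < s) (hst : s ≤ t) :
    rightSpeed y t ≤ ENNReal.ofReal (Real.exp (-(lam * (t - s)))) * rightSpeed y s := by
  rw [rightSpeed, rightSpeed, ← ENNReal.limsup_const_mul_of_ne_top ENNReal.ofReal_ne_top]
  refine limsup_le_limsup ?_
  filter_upwards [self_mem_nhdsWithin] with k hk
  have hk : 0 < k := hk
  rw [← ENNReal.ofReal_mul (Real.exp_pos _).le, ← mul_div_assoc]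
  gcongr
  exact (h.shift hk.le).dist_le_exp_mul_dist h hs hst

lemma sub_le_mul_dist_sub (h : IntegralEVI lam E y e) (ht : 0 < t) {C c : ℝ}
    (hC : ∀ᶠ r in 𝓝[>] t, dist (y r) (y t) ≤ C * (r - t)) {z : Y} (hz : E z = c) :
    e t - c ≤ C * dist (y t) z - lam / 2 * dist (y t) z ^ 2 := by
  suffices hρ : ∀ ρ, -lam * (dist (y t) z ^ 2 / 2) + (c - e t) < ρ → -(C * dist (y t) z) ≤ ρ by
    linarith [le_of_forall_gt_imp_ge_of_dense hρ]
  intro ρ hρ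
  have hlim : Tendsto (fun r ↦ -(C * ((dist (y r) z + dist (y t) z) / 2))) (𝓝[>] t)
      (𝓝 (-(C * dist (y t) z))) := by
    have hc : ContinuousAt (fun r ↦ -(C * ((dist (y r) z + dist (y t) z) / 2))) t := by
      have := h.continuousAt ht
      fun_prop
    simpa using hc.tendsto.mono_left nhdsWithin_le_nhds
  refine le_of_tendsto hlim ?_
  filter_upwards [h.eventually_slope_half_dist_sq_lt ht hz hρ, hC, self_mem_nhdsWithin]
    with r hslope hspeed hr
  refine le_trans ?_ hslope.le
  rw [slope_def_field, le_div_iff₀ (sub_pos.2 hr)]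
  have htri : dist (y t) z - dist (y r) z ≤ C * (r - t) := by
    linarith [dist_triangle_left (y t) z (y r)]
  have hmul := mul_le_mul_of_nonneg_right htri
    (by positivity : 0 ≤ (dist (y r) z + dist (y t) z) / 2)
  linarith

lemma descendingSlope_le_rightSpeed (h : IntegralEVI lam E y e) (ht : 0 < t) :
    descendingSlope E (y t) ≤ rightSpeed y t := by
  refine ennreal_le_of_forall_lt_ofReal fun C C' hC0 hC hCC' ↦ ?_
  refine descendingSlope_le_ofReal (h.energy_eq ht ▸ EReal.coe_ne_top _) (nhdsWithin_le_nhds ?_)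
  filter_upwards [eventually_neg_half_mul_dist_sq_le lam (sub_pos.2 hCC') (y t)] with z hz
  have hbound : 0 ≤ C' * dist (y t) z := mul_nonneg (hC0.trans hCC'.le) dist_nonneg
  rw [h.energy_eq ht]
  induction hEz : E z with
  | bot => simpa using hbound
  | top => simpa using hbound
  | coe c =>
    rw [← EReal.coe_sub, EReal.toReal_coe]
    linarith [h.sub_le_mul_dist_sub ht (eventually_dist_le_of_rightSpeed_lt hC) hEz]

lemma eventually_sub_le_mul_dist (h : IntegralEVI lam E y e) (ht : 0 < t) {C : ℝ}
    (hC : descendingSlope E (y t) < ENNReal.ofReal C) :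
    ∀ᶠ r in 𝓝 t, e t - e r ≤ C * dist (y t) (y r) := by
  filter_upwards [(h.continuousAt ht).eventually
    (eventually_toReal_sub_le_of_descendingSlope_lt hC), Ioi_mem_nhds ht] with r hr hr0
  rwa [h.energy_eq ht, h.energy_eq hr0, ← EReal.coe_sub, EReal.toReal_coe] at hr

lemma rightSpeed_le_descendingSlope (h : IntegralEVI lam E y e) (ht : 0 < t) :
    rightSpeed y t ≤ descendingSlope E (y t) := by
  refine ennreal_le_of_forall_lt_ofReal fun C C' hC0 hC hCC' ↦ rightSpeed_le_ofReal ?_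
  have hdini_le : ∀ᶠ r in 𝓝 t,
      -lam * (dist (y r) (y t) ^ 2 / 2) + (e t - e r) ≤ C' * dist (y r) (y t) := by
    filter_upwards [h.eventually_sub_le_mul_dist ht hC, (h.continuousAt ht).eventually
      (eventually_neg_half_mul_dist_sq_le lam (sub_pos.2 hCC') (y t))] with r hslope hquad
    rw [dist_comm (y r)]
    linarith
  obtain ⟨u, htu, hu⟩ := mem_nhdsGE_iff_exists_Icc_subset.1 (mem_nhdsWithin_of_mem_nhds hdini_le)
  have hpos : ∀ r ∈ Icc t u, 0 < r := fun r hr ↦ ht.trans_le hr.1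
  have hcont : ContinuousOn (fun r ↦ dist (y r) (y t)) (Icc t u) := by
    have hy_cont := h.continuousOn.mono hpos
    fun_prop
  filter_upwards [Icc_mem_nhdsGT htu] with r hr
  have hle := le_add_mul_sub_of_slope_half_sq_lt (f := fun r ↦ dist (y r) (y t))
    (hC0.trans hCC'.le) hcont (fun _ _ ↦ dist_nonneg) (fun x hx ρ hρ ↦ ?_) r hr
  · simpa using hle
  · have hx := Ico_subset_Icc_self hx
    exact (h.eventually_slope_half_dist_sq_lt (hpos x hx) (h.energy_eq ht)
      ((hu hx).trans_lt hρ)).frequently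

lemma descendingSlope_eq_rightSpeed (h : IntegralEVI lam E y e) (ht : 0 < t) :
    descendingSlope E (y t) = rightSpeed y t :=
  (h.descendingSlope_le_rightSpeed ht).antisymm (h.rightSpeed_le_descendingSlope ht)

lemma exp_mul_descendingSlope_le (h : IntegralEVI lam E y e) (hs : 0 < s) (hst : s ≤ t) :
    ENNReal.ofReal (Real.exp (lam * t)) * descendingSlope E (y t) ≤
      ENNReal.ofReal (Real.exp (lam * s)) * descendingSlope E (y s) := by
  rw [h.descendingSlope_eq_rightSpeed hs, h.descendingSlope_eq_rightSpeed (hs.trans_le hst)]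
  calc ENNReal.ofReal (Real.exp (lam * t)) * rightSpeed y t
      ≤ ENNReal.ofReal (Real.exp (lam * t)) *
        (ENNReal.ofReal (Real.exp (-(lam * (t - s)))) * rightSpeed y s) := by
        gcongr
        exact h.rightSpeed_le_exp_mul hs hst
    _ = ENNReal.ofReal (Real.exp (lam * s)) * rightSpeed y s := by
      rw [← mul_assoc, ← ENNReal.ofReal_mul (Real.exp_pos _).le, ← Real.exp_add]
      ring_nf

lemma descendingSlope_ne_top (h : IntegralEVI lam E y e) (hac : LocAbsCont y) (ht : 0 < t) :
    descendingSlope E (y t) ≠ ⊤ := by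
  obtain ⟨s, hs, hspeed⟩ := hac.exists_rightSpeed_ne_top ht
  rw [h.descendingSlope_eq_rightSpeed ht]
  exact ne_top_of_le_ne_top (ENNReal.mul_ne_top ENNReal.ofReal_ne_top hspeed)
    (h.rightSpeed_le_exp_mul hs.1 hs.2.le)

end IntegralEVI

namespace EVI

variable {Y : Type*} [MetricSpace Y] {lam : ℝ} {E : Y → EReal} {y : ℝ → Y} {s t : ℝ}

lemma exp_mul_half_dist_sq_le (hevi : EVI lam E y) (hac : LocAbsCont y) {c c₀ : ℝ}
    (hs : 0 < s) (hst : s ≤ t) {z : Y} (hz : E z = c)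
    (hc₀ : ∀ r ∈ Ioc s t, (c₀ : EReal) ≤ E (y r)) :
    Real.exp (lam * (t - s)) * (dist (y t) z ^ 2 / 2) ≤
      dist (y s) z ^ 2 / 2 + expPrimitive lam (t - s) * (c - c₀) := by
  set H : ℝ → ℝ := fun r ↦
    Real.exp (lam * (r - s)) * (dist (y r) z ^ 2 / 2) - expPrimitive lam (r - s) * (c - c₀)
  suffices hH : H t ≤ H s by
    simp only [H, sub_self, mul_zero, Real.exp_zero, one_mul, expPrimitive_zero, zero_mul,
      sub_zero] at hH
    linarith
  have hexp : ContDiff ℝ 1 fun r ↦ Real.exp (lam * (r - s)) := by fun_prop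
  have hprim : ContDiff ℝ 1 fun r ↦ expPrimitive lam (r - s) * (c - c₀) :=
    ((contDiff_expPrimitive lam).comp (contDiff_id.sub contDiff_const)).mul contDiff_const
  refine le_of_absolutelyContinuousOnInterval_of_ae_deriv_nonpos hst
    ((hexp.contDiffOn.absolutelyContinuousOnInterval.fun_mul
      ((hac s t hs hst).absolutelyContinuousOnInterval_half_dist_sq hst z)).fun_sub
      hprim.contDiffOn.absolutelyContinuousOnInterval) ?_
  filter_upwards [(ae_restrict_iff' measurableSet_Ioi).1 (hevi z)] with r hr hrI
  obtain ⟨d', hd', hle⟩ := hr (hs.trans hrI.1)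
  have hevi_real : d' + c₀ + lam / 2 * dist (y r) z ^ 2 ≤ c := by
    have hle' : (d' : EReal) + c₀ + ((lam / 2 * dist (y r) z ^ 2 : ℝ) : EReal) ≤ c := by
      rw [← hz]
      refine le_trans ?_ hle
      gcongr
      exact hc₀ r hrI
    exact_mod_cast hle'
  have hH' := ((hasDerivAt_exp_mul_sub lam s r).fun_mul hd').fun_sub
    ((hasDerivAt_expPrimitive_sub lam s r).mul_const (c - c₀))
  rw [hH'.deriv]
  have hfactor : Real.exp (lam * (r - s)) *
      (d' + c₀ + lam / 2 * dist (y r) z ^ 2 - c) ≤ 0 :=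
    mul_nonpos_of_nonneg_of_nonpos (Real.exp_pos _).le (sub_nonpos.2 hevi_real)
  linarith

lemma energy_antitone (hevi : EVI lam E y) (hac : LocAbsCont y) (hbot : ∀ y, E y ≠ ⊥)
    (hlsc : LowerSemicontinuous E) (hs : 0 < s) (hst : s ≤ t) : E (y t) ≤ E (y s) := by
  by_cases htop : E (y s) = ⊤
  · simp [htop]
  set S : Set ℝ := Icc s t ∩ y ⁻¹' {z | E z ≤ E (y s)}
  have hS_closed : IsClosed S :=
    (hac.continuousOn.mono fun r hr ↦ hs.trans_le hr.1).preimage_isClosed_of_isClosed isClosed_Icc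
      (hlsc.isClosed_preimage (E (y s)))
  have hS_bdd : BddAbove S := ⟨t, fun r hr ↦ hr.1.2⟩
  -- Past its last time `r` in `S` the energy exceeds `E (y r)`, so the EVI at `y r` pins `y t`.
  obtain ⟨⟨hsr, hrt⟩, hle⟩ : sSup S ∈ S :=
    hS_closed.csSup_mem ⟨s, left_mem_Icc.2 hst, le_refl (E (y s))⟩ hS_bdd
  set r := sSup S
  have hr : E (y r) = (E (y r)).toReal :=
    (EReal.coe_toReal (ne_top_of_le_ne_top htop hle) (hbot _)).symm
  have henergy : ∀ q ∈ Ioc r t, ((E (y r)).toReal : EReal) ≤ E (y q) := by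
    intro q hq
    rw [← hr]
    by_contra! hlt
    exact (le_csSup hS_bdd ⟨⟨hsr.trans hq.1.le, hq.2⟩, hlt.le.trans hle⟩).not_gt hq.1
  have hint := hevi.exp_mul_half_dist_sq_le hac (hs.trans_le hsr) hrt hr henergy
  have hdist : dist (y t) (y r) ^ 2 / 2 ≤ 0 :=
    nonpos_of_mul_nonpos_right (by simpa using hint) (Real.exp_pos (lam * (t - r)))
  have heq : y t = y r := dist_eq_zero.1 (pow_eq_zero_iff two_ne_zero |>.1
    (le_antisymm (by linarith) (sq_nonneg _)))
  rwa [heq]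

lemma energy_ne_top (hevi : EVI lam E y) (hac : LocAbsCont y) (hbot : ∀ y, E y ≠ ⊥)
    (hlsc : LowerSemicontinuous E) (hdom : ∃ y, E y ≠ ⊤) (ht : 0 < t) : E (y t) ≠ ⊤ := by
  obtain ⟨z, hz⟩ := hdom
  obtain ⟨s, hs, d', -, hle⟩ := exists_mem_Ioo_of_ae ht
    (((ae_restrict_iff' measurableSet_Ioi).1 (hevi z)).mono fun s h hs ↦ h hs.1)
  refine ne_top_of_le_ne_top (fun htop ↦ hz ?_) (hevi.energy_antitone hac hbot hlsc hs.1 hs.2.le)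
  rwa [htop, EReal.coe_add_top, EReal.top_add_coe, top_le_iff] at hle

lemma integralEVI (hevi : EVI lam E y) (hac : LocAbsCont y) (hbot : ∀ y, E y ≠ ⊥)
    (hlsc : LowerSemicontinuous E) (hdom : ∃ y, E y ≠ ⊤) :
    IntegralEVI lam E y fun t ↦ (E (y t)).toReal := by
  have henergy : ∀ t, 0 < t → E (y t) = (E (y t)).toReal := fun t ht ↦
    (EReal.coe_toReal (hevi.energy_ne_top hac hbot hlsc hdom ht) (hbot _)).symm
  refine ⟨henergy, hac.continuousOn, fun t ht a ha ↦ ?_, fun s t hs hst z c hz ↦ ?_⟩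
  · have ha' : (a : EReal) < E (y t) := by
      rw [henergy t ht]
      exact_mod_cast ha
    filter_upwards [(hac.continuousOn t ht).eventually (hlsc (y t) a ha'), self_mem_nhdsWithin]
      with r hr hr0
    rw [henergy r hr0] at hr
    exact_mod_cast hr
  · refine hevi.exp_mul_half_dist_sq_le hac hs hst hz fun r hr ↦ ?_
    rw [← henergy t (hs.trans_le hst)]
    exact hevi.energy_antitone hac hbot hlsc (hs.trans hr.1) hr.2

end EVI

theorem gradientFlow_monotonicity_general {Y : Type*} [MetricSpace Y] (lam : ℝ) (E : Y → EReal)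
    (hbot : ∀ y, E y ≠ ⊥) (hlsc : LowerSemicontinuous E) (hdom : ∃ y, E y ≠ ⊤) (y : ℝ → Y)
    (hac : LocAbsCont y) (hevi : EVI lam E y) :
    (∀ t : ℝ, 0 < t → descendingSlope E (y t) ≠ ⊤ ∧ E (y t) ≠ ⊤) ∧
      (∀ s t : ℝ, 0 < s → s ≤ t → E (y t) ≤ E (y s)) ∧
      (∀ s t : ℝ, 0 < s → s ≤ t →
        ENNReal.ofReal (Real.exp (lam * t)) * descendingSlope E (y t) ≤
          ENNReal.ofReal (Real.exp (lam * s)) * descendingSlope E (y s)) := by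
  have h := hevi.integralEVI hac hbot hlsc hdom
  exact ⟨fun t ht ↦ ⟨h.descendingSlope_ne_top hac ht, hevi.energy_ne_top hac hbot hlsc hdom ht⟩,
    fun s t hs hst ↦ hevi.energy_antitone hac hbot hlsc hs hst,
    fun s t hs hst ↦ h.exp_mul_descendingSlope_le hs hst⟩

/-- **Monotonicity properties of gradient flow trajectories** on a CAT(0) space: for
every `t > 0` one has `y_t ∈ D(|∂⁻E|) ⊆ D(E)`, the energy `t ↦ E(y_t)` is nonincreasing
on `(0,∞)` and `t ↦ e^{λt}|∂⁻E|(y_t)` is nonincreasing on `(0,∞)`. -/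
theorem gradientFlow_monotonicity {Y : Type*} [MetricSpace Y] [CompleteSpace Y]
    (hY : Cat0 Y) (lam : ℝ) (E : Y → EReal) (hbot : ∀ y, E y ≠ ⊥)
    (hconv : LamConvex lam E) (hlsc : LowerSemicontinuous E) (hdom : ∃ y, E y ≠ ⊤)
    (y₀ : Y) (ytraj : ℝ → Y) (hgf : GradientFlow lam E y₀ ytraj) :
    (∀ t : ℝ, 0 < t → descendingSlope E (ytraj t) ≠ ⊤ ∧ E (ytraj t) ≠ ⊤) ∧
      (∀ s t : ℝ, 0 < s → s ≤ t → E (ytraj t) ≤ E (ytraj s)) ∧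
      (∀ s t : ℝ, 0 < s → s ≤ t →
        ENNReal.ofReal (Real.exp (lam * t)) * descendingSlope E (ytraj t) ≤
          ENNReal.ofReal (Real.exp (lam * s)) * descendingSlope E (ytraj s)) :=
  gradientFlow_monotonicity_general lam E hbot hlsc hdom ytraj hgf.1 hgf.2.2
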